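/- arXiv:2202.05990 — 5 statements merged into one kernel-verified Lean document; each statement's English description precedes it below -/
import Mathlib

section
/- Monotonicity of the in-H-index in the order: for every finite directed graph G, every vertex v, and every natural number n, it holds that iH_G^(n+1)(v) ≤ iH_G^(n)(v). In particular, the sequence n ↦ iH_G^(n)(v) is non-increasing and eventually constant; its eventual value is denoted iH_G^(∞)(v). -/
open Finset

variable {V : Type*} [Fintype V] [DecidableEq V]

/-- The in-neighbors of `v` within `S`: vertices `u ∈ S` with an edge `u → v`. -/
def inN (E : V → V → Prop) [DecidableRel E] (S : Finset V) (v : V) : Finset V :=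
  S.filter (fun u => E u v)

/-- The out-neighbors of `v` within `S`: vertices `u ∈ S` with an edge `v → u`. -/
def outN (E : V → V → Prop) [DecidableRel E] (S : Finset V) (v : V) : Finset V :=
  S.filter (fun u => E v u)

/-- `S` satisfies the `(k,l)`-degree constraints: every `v ∈ S` has at least `k`
in-neighbors in `S` and at least `l` out-neighbors in `S`. -/
def satisfiesKL (E : V → V → Prop) [DecidableRel E] (k l : ℕ) (S : Finset V) : Prop :=
  ∀ v ∈ S, k ≤ (inN E S v).card ∧ l ≤ (outN E S v).card

instance (E : V → V → Prop) [DecidableRel E] (k l : ℕ) (S : Finset V) :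
    Decidable (satisfiesKL E k l S) := by unfold satisfiesKL; infer_instance

/-- The `(k,l)`-core of the graph: the union of all vertex subsets satisfying the
`(k,l)`-degree constraints. -/
def core (E : V → V → Prop) [DecidableRel E] (k l : ℕ) : Finset V :=
  (Finset.univ.powerset.filter (satisfiesKL E k l)).sup id

/-- `kmax E v`: the largest `k` such that `v` belongs to the `(k,0)`-core. -/
noncomputable def kmax (E : V → V → Prop) [DecidableRel E] (v : V) : ℕ :=
  sSup {k : ℕ | v ∈ core E k 0}

/-- `lmax E v k`: the largest `l` such that `v` belongs to the `(k,l)`-core. -/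
noncomputable def lmax (E : V → V → Prop) [DecidableRel E] (v : V) (k : ℕ) : ℕ :=
  sSup {l : ℕ | v ∈ core E k l}

/-- The H-index of a finite multiset of naturals: the largest `h` such that at least
`h` elements (with multiplicity) are `≥ h`. -/
noncomputable def hIndex (M : Multiset ℕ) : ℕ :=
  sSup {h : ℕ | h ≤ (M.filter (fun x => h ≤ x)).card}

/-- The `n`-order in-H-index of a vertex `v` in the graph with vertex set `S`
and edge relation `E`. -/
noncomputable def iH (E : V → V → Prop) [DecidableRel E] (S : Finset V) : ℕ → V → ℕ
  | 0 => fun v => (inN E S v).card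
  | n + 1 => fun v => hIndex ((inN E S v).val.map (iH E S n))

/-- The `n`-order out-H-index of a vertex `v` in the graph with vertex set `S`
and edge relation `E`. -/
noncomputable def oH (E : V → V → Prop) [DecidableRel E] (S : Finset V) : ℕ → V → ℕ
  | 0 => fun v => (outN E S v).card
  | n + 1 => fun v => hIndex ((outN E S v).val.map (oH E S n))

/-- The eventual (limit) value of the in-H-index sequence. -/
noncomputable def iHlim (E : V → V → Prop) [DecidableRel E] (S : Finset V) (v : V) : ℕ :=
  ⨅ n, iH E S n v

/-- The eventual (limit) value of the out-H-index sequence. -/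
noncomputable def oHlim (E : V → V → Prop) [DecidableRel E] (S : Finset V) (v : V) : ℕ :=
  ⨅ n, oH E S n v

/-- `(k,l)` is a skyline coreness of `v`: `v` is in the `(k,l)`-core and there is no
pair `(k',l')` strictly dominating `(k,l)` with `v` in the `(k',l')`-core. -/
def skyline (E : V → V → Prop) [DecidableRel E] (v : V) (p : ℕ × ℕ) : Prop :=
  v ∈ core E p.1 p.2 ∧
    ¬ ∃ q : ℕ × ℕ, (p.1 ≤ q.1 ∧ p.2 ≤ q.2 ∧ p ≠ q) ∧ v ∈ core E q.1 q.2

theorem aux_bdd (M : Multiset ℕ) :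
    BddAbove {h : ℕ | h ≤ (M.filter (fun x => h ≤ x)).card} :=
  ⟨M.card, fun _ hh => le_trans hh (Multiset.card_le_card (Multiset.filter_le _ _))⟩

theorem aux_le_card (M : Multiset ℕ) : hIndex M ≤ M.card :=
  csSup_le ⟨0, Nat.zero_le _⟩
    (fun _ hh => le_trans hh (Multiset.card_le_card (Multiset.filter_le _ _)))

theorem aux_mono {W : Type*} (s : Multiset W) (f g : W → ℕ) (hfg : ∀ u, f u ≤ g u) :
    hIndex (s.map f) ≤ hIndex (s.map g) := by
  refine csSup_le_csSup (aux_bdd _) ⟨0, Nat.zero_le _⟩ ?_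
  intro h hh
  simp only [Set.mem_setOf_eq, Multiset.filter_map, Multiset.card_map] at hh ⊢
  refine le_trans hh (Multiset.card_le_card (Multiset.monotone_filter_right _ ?_))
  intro u hu
  exact le_trans hu (hfg u)

theorem aux_step (E : V → V → Prop) [DecidableRel E] (n : ℕ) :
    ∀ v : V, iH E Finset.univ (n + 1) v ≤ iH E Finset.univ n v := by
  induction n with
  | zero =>
    intro v
    refine le_trans (aux_le_card _) ?_
    rw [Multiset.card_map]
    exact le_rfl
  | succ n ih =>
    intro v
    exact aux_mono _ _ _ ih

/-- **Monotonicity of the in-H-index in the order.** The sequence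
`n ↦ iH_G^(n)(v)` is non-increasing, hence eventually constant. -/
theorem iH_antitone_and_eventually_const (E : V → V → Prop) [DecidableRel E] (v : V) :
    (∀ n : ℕ, iH E Finset.univ (n + 1) v ≤ iH E Finset.univ n v) ∧
    (∃ N : ℕ, ∀ n : ℕ, N ≤ n → iH E Finset.univ n v = iH E Finset.univ N v) := by
  refine ⟨fun n => aux_step E n v, ?_⟩
  have ha : Antitone (fun n => iH E Finset.univ n v) :=
    antitone_nat_of_succ_le (fun n => aux_step E n v)
  obtain ⟨N, hN⟩ := WellFounded.has_min (wellFounded_lt (α := ℕ))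
    (Set.range (fun n => iH E Finset.univ n v)) ⟨_, 0, rfl⟩
  obtain ⟨⟨k, rfl⟩, hk⟩ := hN
  exact ⟨k, fun n hn => le_antisymm (ha hn) (not_lt.mp (hk _ ⟨n, rfl⟩))⟩
end

section
/- The limit in-H-index level sets satisfy the in-degree constraint: let G be a finite directed graph and c a natural number. Then the set S_c = {u ∈ V : iH_G^(∞)(u) ≥ c} has the property that every vertex u ∈ S_c has at least c in-neighbors inside S_c; in other words, S_c satisfies the (c,0)-degree constraints, so S_c is contained in the (c,0)-core of G. -/
open Finset

variable {V : Type*} [Fintype V] [DecidableEq V]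

/-- The level set `S_c = {u : iH^(∞)(u) ≥ c}` of the limit in-H-index. -/
noncomputable def levelSet (E : V → V → Prop) [DecidableRel E] (c : ℕ) : Finset V :=
  @Finset.filter _ (fun u => c ≤ iHlim E Finset.univ u) (Classical.decPred _) Finset.univ

theorem le_hIndex_iff (S : Finset V) (f : V → ℕ) (c : ℕ) :
    c ≤ hIndex (S.val.map f) ↔ c ≤ (S.filter (fun u => c ≤ f u)).card := by
  have key : ∀ h : ℕ, ((S.val.map f).filter (fun x => h ≤ x)).card
      = (S.filter (fun u => h ≤ f u)).card := by
    intro h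
    rw [Multiset.filter_map, Multiset.card_map]
    rfl
  unfold hIndex
  simp only [key]
  have hb : BddAbove {h : ℕ | h ≤ (S.filter (fun u => h ≤ f u)).card} :=
    ⟨S.card, fun h hh => le_trans hh (Finset.card_filter_le _ _)⟩
  constructor
  · intro hc
    have hm := Nat.sSup_mem (s := {h : ℕ | h ≤ (S.filter (fun u => h ≤ f u)).card})
      ⟨0, Nat.zero_le _⟩ hb
    refine hc.trans (le_trans hm (Finset.card_le_card ?_))
    intro u hu
    rw [Finset.mem_filter] at hu ⊢
    exact ⟨hu.1, hc.trans hu.2⟩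
  · intro hc
    exact le_csSup hb hc

theorem iH_succ_le (E : V → V → Prop) [DecidableRel E] (S : Finset V) (n : ℕ) :
    ∀ v, iH E S (n + 1) v ≤ iH E S n v := by
  induction n with
  | zero =>
    intro v
    exact ((le_hIndex_iff (inN E S v) (iH E S 0) _).1 le_rfl).trans (Finset.card_filter_le _ _)
  | succ n ih =>
    intro v
    refine (le_hIndex_iff (inN E S v) (iH E S n) _).2 ?_
    refine ((le_hIndex_iff (inN E S v) (iH E S (n + 1)) _).1 le_rfl).trans
      (Finset.card_le_card ?_)
    intro u hu
    rw [Finset.mem_filter] at hu ⊢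
    exact ⟨hu.1, hu.2.trans (ih u)⟩

theorem levelSet_indeg (E : V → V → Prop) [DecidableRel E] (c : ℕ) :
    ∀ u ∈ levelSet E c, c ≤ (inN E (levelSet E c) u).card := by
  have hex : ∀ u, ∃ n, iH E Finset.univ n u = iHlim E Finset.univ u := fun u =>
    Nat.sInf_mem (Set.range_nonempty (fun n => iH E Finset.univ n u))
  choose m hm using hex
  have hN : ∀ u, iH E Finset.univ (Finset.univ.sup m) u ≤ iHlim E Finset.univ u := by
    intro u
    rw [← hm u]
    exact antitone_nat_of_succ_le (f := fun n => iH E Finset.univ n u)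
      (fun n => iH_succ_le E Finset.univ n u) (Finset.le_sup (Finset.mem_univ u))
  intro u hu
  have hu2 : c ≤ iHlim E Finset.univ u := by
    unfold levelSet at hu
    exact ((@Finset.mem_filter _ _ (Classical.decPred _) _ _).1 hu).2
  have h1 : c ≤ iH E Finset.univ (Finset.univ.sup m + 1) u :=
    hu2.trans (Nat.sInf_le ⟨_, rfl⟩)
  refine ((le_hIndex_iff _ _ _).1 h1).trans (Finset.card_le_card ?_)
  intro w hw
  unfold inN at hw ⊢
  rw [Finset.mem_filter, Finset.mem_filter] at hw
  rw [Finset.mem_filter]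
  refine ⟨?_, hw.1.2⟩
  unfold levelSet
  exact (@Finset.mem_filter _ _ (Classical.decPred _) _ _).2 ⟨Finset.mem_univ _, hw.2.trans (hN w)⟩

/-- Every vertex of `S_c` has at least `c` in-neighbors inside `S_c`;
hence `S_c` satisfies the `(c,0)`-degree constraints and is contained in the `(c,0)`-core. -/
theorem levelSet_in_core (E : V → V → Prop) [DecidableRel E] (c : ℕ) :
    (∀ u ∈ levelSet E c, c ≤ (inN E (levelSet E c) u).card) ∧
    satisfiesKL E c 0 (levelSet E c) ∧
    levelSet E c ⊆ core E c 0 := by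
  have h1 := levelSet_indeg E c
  have h2 : satisfiesKL E c 0 (levelSet E c) := fun v hv => ⟨h1 v hv, Nat.zero_le _⟩
  refine ⟨h1, h2, ?_⟩
  unfold core
  exact Finset.le_sup (f := id) (Finset.mem_filter.2
    ⟨Finset.mem_powerset.2 (Finset.subset_univ _), h2⟩)
end

section
/- Convergence of the out-H-index (out-degree analogue of Theorem 4.1): for every finite directed graph G' and every vertex v of G', the non-increasing sequence n ↦ oH_{G'}^(n)(v) is eventually constant, and its eventual value oH_{G'}^(∞)(v) equals the largest l such that v belongs to the (0,l)-core of G'. -/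
open Finset

variable {V : Type*} [Fintype V] [DecidableEq V]

theorem aux_le_hIndex (M : Multiset ℕ) (l : ℕ) :
    l ≤ hIndex M ↔ l ≤ (M.filter (fun x => l ≤ x)).card := by
  have hbdd : BddAbove {h : ℕ | h ≤ (M.filter (fun x => h ≤ x)).card} :=
    ⟨M.card, fun h hh => le_trans hh (Multiset.card_le_card (Multiset.filter_le _ _))⟩
  constructor
  · intro h
    have hm : hIndex M ≤ (M.filter (fun x => hIndex M ≤ x)).card :=
      Nat.sSup_mem (s := {h : ℕ | h ≤ (M.filter (fun x => h ≤ x)).card}) ⟨0, Nat.zero_le _⟩ hbdd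
    exact h.trans (hm.trans (Multiset.card_le_card
      (Multiset.monotone_filter_right M (fun x hx => h.trans hx))))
  · intro h
    exact le_csSup hbdd h

theorem aux_le_oH_succ (E : V → V → Prop) [DecidableRel E] (S : Finset V) (n l : ℕ) (v : V) :
    l ≤ oH E S (n + 1) v ↔ l ≤ ((outN E S v).filter (fun u => l ≤ oH E S n u)).card := by
  show l ≤ hIndex ((outN E S v).val.map (oH E S n)) ↔ _
  rw [aux_le_hIndex, Multiset.filter_map, Multiset.card_map]
  rfl

theorem aux_anti (E : V → V → Prop) [DecidableRel E] (S : Finset V) (n : ℕ) :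
    ∀ v, oH E S (n + 1) v ≤ oH E S n v := by
  induction n with
  | zero =>
    intro v
    exact ((aux_le_oH_succ E S 0 _ v).1 le_rfl).trans (Finset.card_le_card (Finset.filter_subset _ _))
  | succ n ih =>
    intro v
    rw [aux_le_oH_succ]
    refine ((aux_le_oH_succ E S (n + 1) _ v).1 le_rfl).trans (Finset.card_le_card ?_)
    exact Finset.monotone_filter_right _ (fun u _ hu => le_trans hu (ih u))

theorem aux_mem_core (E : V → V → Prop) [DecidableRel E] (k l : ℕ) (v : V) :
    v ∈ core E k l ↔ ∃ S, satisfiesKL E k l S ∧ v ∈ S := by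
  simp [core, Finset.mem_sup]

theorem aux_core_le (E : V → V → Prop) [DecidableRel E] (l : ℕ) (S : Finset V)
    (hS : satisfiesKL E 0 l S) (n : ℕ) : ∀ v ∈ S, l ≤ oH E Finset.univ n v := by
  induction n with
  | zero =>
    intro v hv
    exact (hS v hv).2.trans (Finset.card_le_card
      (Finset.filter_subset_filter _ (Finset.subset_univ S)))
  | succ n ih =>
    intro v hv
    rw [aux_le_oH_succ]
    refine (hS v hv).2.trans (Finset.card_le_card ?_)
    intro u hu
    simp only [outN, Finset.mem_filter, Finset.mem_univ, true_and] at hu ⊢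
    exact ⟨hu.2, ih u hu.1⟩

theorem aux_stab (E : V → V → Prop) [DecidableRel E] (v : V) :
    ∃ N : ℕ, ∀ n : ℕ, N ≤ n → oH E Finset.univ n v = oHlim E Finset.univ v := by
  have hanti : Antitone (fun n => oH E Finset.univ n v) :=
    antitone_nat_of_succ_le (fun n => aux_anti E _ n v)
  obtain ⟨N, hN⟩ := Nat.sInf_mem (Set.range_nonempty (fun n => oH E Finset.univ n v))
  refine ⟨N, fun n hn => le_antisymm ?_ ?_⟩
  · exact (hanti hn).trans (le_of_eq hN)
  · exact Nat.sInf_le ⟨n, rfl⟩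

theorem aux_core_iff (E : V → V → Prop) [DecidableRel E] (v : V) (l : ℕ) :
    v ∈ core E 0 l ↔ l ≤ oHlim E Finset.univ v := by
  choose N hN using aux_stab E
  rw [aux_mem_core]
  constructor
  · rintro ⟨S, hS, hv⟩
    rw [← hN v _ le_rfl]
    exact aux_core_le E l S hS _ v hv
  · intro h
    let M := Finset.univ.sup N
    have hM : ∀ u n, M ≤ n → oH E Finset.univ n u = oHlim E Finset.univ u := fun u n hn =>
      hN u n ((Finset.le_sup (Finset.mem_univ u)).trans hn)
    refine ⟨Finset.univ.filter (fun u => l ≤ oHlim E Finset.univ u), ?_, by simpa using h⟩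
    intro u hu
    refine ⟨Nat.zero_le _, ?_⟩
    have hu' := (Finset.mem_filter.1 hu).2
    rw [← hM u (M + 1) (Nat.le_succ _), aux_le_oH_succ] at hu'
    refine hu'.trans (Finset.card_le_card ?_)
    intro w hw
    simp only [outN, Finset.mem_filter, Finset.mem_univ, true_and] at hw ⊢
    rw [hM w M le_rfl] at hw
    exact ⟨hw.2, hw.1⟩

/-- **out-degree analogue of Theorem 4.1.** The non-increasing sequence
`n ↦ oH_{G'}^(n)(v)` is eventually constant, and its eventual value equals the largest
`l` such that `v` belongs to the `(0,l)`-core of `G'`. -/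
theorem oHlim_eq_lmax_zero (E : V → V → Prop) [DecidableRel E] (v : V) :
    (∀ n : ℕ, oH E Finset.univ (n + 1) v ≤ oH E Finset.univ n v) ∧
    (∃ N : ℕ, ∀ n : ℕ, N ≤ n → oH E Finset.univ n v = oHlim E Finset.univ v) ∧
    oHlim E Finset.univ v = lmax E v 0 := by
  refine ⟨fun n => aux_anti E _ n v, aux_stab E v, ?_⟩
  have : {l : ℕ | v ∈ core E 0 l} = Set.Iic (oHlim E Finset.univ v) := by
    ext l
    exact aux_core_iff E v l
  rw [lmax, this, csSup_Iic]
end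

section
/- Skyline corenesses determine core membership: let G be a finite directed graph and v a vertex. For all natural numbers k, l, the vertex v belongs to the (k,l)-core of G if and only if there exists a skyline coreness (k',l') of v with k ≤ k' and l ≤ l'. -/
open Finset

variable {V : Type*} [Fintype V] [DecidableEq V]

lemma mem_core_iff_exists (E : V → V → Prop) [DecidableRel E] (v : V) (k l : ℕ) :
    v ∈ core E k l ↔ ∃ S : Finset V, satisfiesKL E k l S ∧ v ∈ S := by
  simp [core, Finset.mem_sup]

lemma core_bound (E : V → V → Prop) [DecidableRel E] (v : V) (k l : ℕ)
    (h : v ∈ core E k l) : k ≤ Fintype.card V ∧ l ≤ Fintype.card V := by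
  obtain ⟨S, hS, hv⟩ := (mem_core_iff_exists E v k l).1 h
  exact ⟨(hS v hv).1.trans (Finset.card_le_univ _), (hS v hv).2.trans (Finset.card_le_univ _)⟩

lemma exists_skyline (E : V → V → Prop) [DecidableRel E] (v : V) (n : ℕ) :
    ∀ k l : ℕ, 2 * Fintype.card V ≤ k + l + n → v ∈ core E k l →
      ∃ p : ℕ × ℕ, skyline E v p ∧ k ≤ p.1 ∧ l ≤ p.2 := by
  induction n with
  | zero =>
    intro k l hn h
    refine ⟨(k, l), ⟨h, ?_⟩, le_rfl, le_rfl⟩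
    rintro ⟨⟨a, b⟩, ⟨h1, h2, h3⟩, h4⟩
    have := core_bound E v _ _ h4
    simp only at h1 h2 this
    apply h3
    ext <;> simp only <;> omega
  | succ n ih =>
    intro k l hn h
    by_cases hs : skyline E v (k, l)
    · exact ⟨(k, l), hs, le_rfl, le_rfl⟩
    · have : ∃ q : ℕ × ℕ, (k ≤ q.1 ∧ l ≤ q.2 ∧ (k, l) ≠ q) ∧ v ∈ core E q.1 q.2 := by
        by_contra hc
        exact hs ⟨h, hc⟩
      obtain ⟨⟨a, b⟩, ⟨h1, h2, h3⟩, h4⟩ := this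
      simp only [ne_eq, Prod.mk.injEq] at h1 h2 h3 h4
      obtain ⟨p, hp, hp1, hp2⟩ := ih a b (by omega) h4
      exact ⟨p, hp, h1.trans hp1, h2.trans hp2⟩

/-- **Skyline corenesses determine core membership.** `v` belongs to the
`(k,l)`-core iff some skyline coreness `(k',l')` of `v` satisfies `k ≤ k'` and `l ≤ l'`. -/
theorem mem_core_iff_skyline (E : V → V → Prop) [DecidableRel E] (v : V) (k l : ℕ) :
    v ∈ core E k l ↔ ∃ p : ℕ × ℕ, skyline E v p ∧ k ≤ p.1 ∧ l ≤ p.2 := by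
  constructor
  · exact exists_skyline E v (2 * Fintype.card V) k l (by omega)
  · rintro ⟨p, ⟨hp, _⟩, h1, h2⟩
    obtain ⟨S, hS, hv⟩ := (mem_core_iff_exists E v _ _).1 hp
    exact (mem_core_iff_exists E v k l).2
      ⟨S, fun u hu => ⟨h1.trans (hS u hu).1, h2.trans (hS u hu).2⟩, hv⟩
end

section
/- Property 5.1(II): let G be a finite directed graph, v a vertex, and (k_v, l_v) a skyline coreness of v. Then it cannot simultaneously hold that v has at least k_v + 1 in-neighbors v' each having a skyline coreness (k',l') with k_v + 1 ≤ k' and l_v ≤ l', and that v has at least l_v out-neighbors v'' each having a skyline coreness (k'',l'') with k_v + 1 ≤ k'' and l_v ≤ l''. -/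
open Finset

variable {V : Type*} [Fintype V] [DecidableEq V]

theorem mem_core_iff' (E : V → V → Prop) [DecidableRel E] (k l : ℕ) (v : V) :
    v ∈ core E k l ↔ ∃ S : Finset V, satisfiesKL E k l S ∧ v ∈ S := by
  simp [core, Finset.mem_sup]

theorem core_mono' (E : V → V → Prop) [DecidableRel E] {k l k' l' : ℕ} (hk : k ≤ k')
    (hl : l ≤ l') {v : V} (h : v ∈ core E k' l') : v ∈ core E k l := by
  rw [mem_core_iff'] at h ⊢
  obtain ⟨S, hS, hv⟩ := h
  exact ⟨S, fun u hu => ⟨hk.trans (hS u hu).1, hl.trans (hS u hu).2⟩, hv⟩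

theorem inN_mono' (E : V → V → Prop) [DecidableRel E] {S T : Finset V} (h : S ⊆ T) (v : V) :
    (inN E S v).card ≤ (inN E T v).card :=
  Finset.card_le_card (Finset.filter_subset_filter _ h)

theorem outN_mono' (E : V → V → Prop) [DecidableRel E] {S T : Finset V} (h : S ⊆ T) (v : V) :
    (outN E S v).card ≤ (outN E T v).card :=
  Finset.card_le_card (Finset.filter_subset_filter _ h)

theorem core_sat' (E : V → V → Prop) [DecidableRel E] (k l : ℕ) :
    satisfiesKL E k l (core E k l) := by
  intro v hv
  obtain ⟨S, hS, hvS⟩ := (mem_core_iff' E k l v).1 hv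
  have hsub : S ⊆ core E k l := fun u hu => (mem_core_iff' E k l u).2 ⟨S, hS, hu⟩
  exact ⟨(hS v hvS).1.trans (inN_mono' E hsub v), (hS v hvS).2.trans (outN_mono' E hsub v)⟩

/-- **Property 5.1(II).** If `(kv,lv)` is a skyline coreness of `v`, then
it cannot hold simultaneously that `v` has `kv + 1` in-neighbors with a skyline coreness
dominating `(kv+1, lv)` and `lv` out-neighbors with a skyline coreness dominating
`(kv+1, lv)`. -/
theorem skyline_neighbor_property_II (E : V → V → Prop) [DecidableRel E]
    (v : V) (kv lv : ℕ) (h : skyline E v (kv, lv)) :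
    ¬(kv + 1 ≤
        Set.ncard {u : V | E u v ∧ ∃ p : ℕ × ℕ, skyline E u p ∧ kv + 1 ≤ p.1 ∧ lv ≤ p.2} ∧
      lv ≤
        Set.ncard {u : V | E v u ∧ ∃ p : ℕ × ℕ, skyline E u p ∧ kv + 1 ≤ p.1 ∧ lv ≤ p.2}) := by
  rintro ⟨h1, h2⟩
  apply h.2
  refine ⟨(kv + 1, lv), ⟨by simp, le_refl _, by simp⟩, ?_⟩
  change v ∈ core E (kv + 1) lv
  have hsub : core E (kv + 1) lv ⊆ insert v (core E (kv + 1) lv) := Finset.subset_insert _ _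
  refine (mem_core_iff' E _ _ v).2 ⟨insert v (core E (kv + 1) lv), ?_, Finset.mem_insert_self _ _⟩
  intro u hu
  rcases Finset.mem_insert.1 hu with rfl | hu
  · refine ⟨h1.trans (le_trans ?_ (inN_mono' E hsub u)),
      h2.trans (le_trans ?_ (outN_mono' E hsub u))⟩
    · rw [← Set.ncard_coe_finset]
      refine Set.ncard_le_ncard ?_ (Finset.finite_toSet _)
      rintro w ⟨hw, p, hp, hk, hl⟩
      exact Finset.mem_coe.2 (Finset.mem_filter.2 ⟨core_mono' E hk hl hp.1, hw⟩)
    · rw [← Set.ncard_coe_finset]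
      refine Set.ncard_le_ncard ?_ (Finset.finite_toSet _)
      rintro w ⟨hw, p, hp, hk, hl⟩
      exact Finset.mem_coe.2 (Finset.mem_filter.2 ⟨core_mono' E hk hl hp.1, hw⟩)
  · have := core_sat' E (kv + 1) lv u hu
    exact ⟨this.1.trans (inN_mono' E hsub u), this.2.trans (outN_mono' E hsub u)⟩
end
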